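/- arXiv:2511.03358 — 2 statements merged into one kernel-verified Lean document; each statement's English description precedes it below -/
import Mathlib

section
/- Fix a > 0, θ > 0, σa > 0, σm > 0 and ν ∈ [0,1]. Then the equation F(ν,σa,σm,a,θ)[μ] = 0 has either exactly one solution (namely μ = 0) or exactly three solutions; it has exactly three solutions if and only if F'_μ[0] > 0, and exactly one solution if and only if F'_μ[0] ≤ 0. -/
open MeasureTheory Real Set Filter

/-- Unnormalised stationary density ρ0[μ](x) of the McKean–Vlasov SDE
`dX = (aX − X³ − θ(X − m₁))dt + σa dB¹ + σm X ∘_ν dB²`. -/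
noncomputable def rho0 (ν σa σm a θ μ x : ℝ) : ℝ :=
  Real.exp (((a - θ - ν * σm ^ 2 + σa ^ 2 / σm ^ 2) / σm ^ 2) *
      Real.log (1 + (σm ^ 2 / σa ^ 2) * x ^ 2) +
    (2 * θ * μ / (σa * σm)) * Real.arctan (σm * x / σa) - x ^ 2 / σm ^ 2)

/-- Normalisation constant Z[μ] = ∫ ρ0[μ]. -/
noncomputable def Z (ν σa σm a θ μ : ℝ) : ℝ := ∫ x : ℝ, rho0 ν σa σm a θ μ x

/-- Self-consistency function F(ν,σa,σm,a,θ)[μ] = (∫ (x−μ)·ρ0[μ]) / Z[μ]. -/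
noncomputable def F (ν σa σm a θ μ : ℝ) : ℝ :=
  (∫ x : ℝ, (x - μ) * rho0 ν σa σm a θ μ x) / Z ν σa σm a θ μ

/-- F'_μ[0] : the derivative at μ = 0 of μ ↦ F(ν,σa,σm,a,θ)[μ]. -/
noncomputable def Fmu' (ν σa σm a θ : ℝ) : ℝ := deriv (fun μ => F ν σa σm a θ μ) 0


lemma aux_sinh_mul {r x : ℝ} (hr : 1 < r) (hx : 0 < x) : r * sinh x < sinh (r * x) := by
  have key : StrictMonoOn (fun y : ℝ => sinh (r * y) - r * sinh y) (Set.Ici 0) := by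
    apply strictMonoOn_of_deriv_pos (convex_Ici 0)
    · fun_prop
    · intro y hy
      rw [interior_Ici] at hy
      have hy : 0 < y := hy
      have h1 : HasDerivAt (fun y : ℝ => sinh (r * y) - r * sinh y)
          (cosh (r * y) * (r * 1) - r * cosh y) y :=
        (((hasDerivAt_id y).const_mul r).sinh).sub ((Real.hasDerivAt_sinh y).const_mul r)
      rw [h1.deriv]
      have h2 : cosh y < cosh (r * y) := by
        rw [Real.cosh_lt_cosh, abs_of_pos hy, abs_of_pos (by positivity)]
        nlinarith
      nlinarith
  have := key (show (0:ℝ) ∈ Set.Ici 0 by simp) (show x ∈ Set.Ici 0 from hx.le) hx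
  simp at this
  linarith

lemma aux_D {t p q : ℝ} (ht : 0 < t) (hp : 0 < p) (hpq : p < q) :
    sinh (t * p) * q < sinh (t * q) * p := by
  have h := aux_sinh_mul (r := q / p) (x := t * p) ((one_lt_div hp).2 hpq) (by positivity)
  have e : q / p * (t * p) = t * q := by field_simp
  rw [e, div_mul_eq_mul_div, div_lt_iff₀ hp] at h
  linarith

lemma aux_N {t s p : ℝ} (ht : 0 < t) (hts : t < s) (hp : 0 < p) :
    0 < s * cosh (s * p) * sinh (t * p) - t * sinh (s * p) * cosh (t * p) := by
  have key : StrictMonoOn (fun p : ℝ =>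
      s * cosh (s * p) * sinh (t * p) - t * sinh (s * p) * cosh (t * p)) (Set.Ici 0) := by
    apply strictMonoOn_of_deriv_pos (convex_Ici 0)
    · fun_prop
    · intro y hy
      rw [interior_Ici] at hy
      have hy : 0 < y := hy
      have hs := (hasDerivAt_id y).const_mul s
      have ht' := (hasDerivAt_id y).const_mul t
      have h1 := ((hs.cosh.const_mul s).mul ht'.sinh).sub ((hs.sinh.const_mul t).mul ht'.cosh)
      have h2 := h1.deriv
      simp only [id] at h2
      refine lt_of_lt_of_eq ?_ h2.symm
      have a1 : 0 < sinh (s * y) := Real.sinh_pos_iff.2 (by nlinarith)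
      have a2 : 0 < sinh (t * y) := Real.sinh_pos_iff.2 (by positivity)
      have : 0 < (s^2 - t^2) * (sinh (s * y) * sinh (t * y)) :=
        mul_pos (by nlinarith) (by positivity)
      linarith
  have := key (show (0:ℝ) ∈ Set.Ici 0 by simp) (show p ∈ Set.Ici 0 from hp.le) hp
  simpa using this

lemma aux_R {t s p q : ℝ} (ht : 0 < t) (hts : t < s) (hp : 0 < p) (hpq : p < q) :
    sinh (s * p) * sinh (t * q) < sinh (s * q) * sinh (t * p) := by
  have key : StrictMonoOn (fun p : ℝ => sinh (s * p) / sinh (t * p)) (Set.Ioi 0) := by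
    have hne : ∀ y ∈ Set.Ioi (0:ℝ), sinh (t * y) ≠ 0 := fun y hy =>
      (Real.sinh_pos_iff.2 (mul_pos ht hy)).ne'
    apply strictMonoOn_of_deriv_pos (convex_Ioi 0)
    · exact ContinuousOn.div (by fun_prop) (by fun_prop) hne
    · intro y hy
      rw [interior_Ioi] at hy
      have hs := (hasDerivAt_id y).const_mul s
      have ht' := (hasDerivAt_id y).const_mul t
      have h1 := (hs.sinh.div ht'.sinh (hne y hy)).deriv
      simp only [id] at h1
      refine lt_of_lt_of_eq ?_ h1.symm
      have a2 : 0 < sinh (t * y) := Real.sinh_pos_iff.2 (mul_pos ht hy)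
      apply div_pos _ (by positivity)
      have := aux_N ht hts hy
      linarith
  have h := key (show p ∈ Set.Ioi 0 from hp) (show q ∈ Set.Ioi 0 from hp.trans hpq) hpq
  have a1 : 0 < sinh (t * p) := Real.sinh_pos_iff.2 (by positivity)
  have a2 : 0 < sinh (t * q) := Real.sinh_pos_iff.2 (mul_pos ht (hp.trans hpq))
  simp only at h
  rwa [div_lt_div_iff₀ a1 a2] at h

/-- exponential lower bound for the ratio -/
lemma aux_E {t p q : ℝ} (ht : 0 < t) (hp : 0 < p) (hpq : p ≤ q) :
    sinh (t * p) * (1 + t * (q - p)) ≤ sinh (t * q) := by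
  have e : sinh (t * q) = sinh (t*p) * cosh (t * (q-p)) + cosh (t*p) * sinh (t * (q-p)) := by
    rw [← Real.sinh_add]; congr 1; ring
  have h0 : 0 ≤ t * (q - p) := mul_nonneg ht.le (by linarith)
  have h1 : 0 < sinh (t * p) := Real.sinh_pos_iff.2 (by positivity)
  have h2 := Real.sinh_lt_cosh (t * p)
  have h3 : t * (q - p) ≤ sinh (t * (q-p)) := Real.self_le_sinh_iff.2 h0
  have h4 := Real.one_le_cosh (t * (q-p))
  rw [e]
  nlinarith [mul_le_mul_of_nonneg_left h4 h1.le, mul_le_mul_of_nonneg_left h3 h1.le,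
    mul_le_mul_of_nonneg_right h2.le (h0.trans h3)]

lemma aux_pos {f : ℝ → ℝ} (hc : Continuous f) (hi : Integrable f) (h0 : ∀ x, 0 ≤ f x)
    {x : ℝ} (hx : f x ≠ 0) : 0 < ∫ x, f x := by
  rw [integral_pos_iff_support_of_nonneg h0 hi]
  exact hc.isOpen_support.measure_pos _ ⟨x, hx⟩

lemma aux_int {h φ : ℝ → ℝ} (hi : Integrable h) (hφ : Continuous φ) {M : ℝ}
    (hM : ∀ x, |φ x| ≤ M) (t : ℝ) : Integrable (fun x => h x * exp (t * φ x)) := by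
  refine hi.mul_bdd (c := exp (|t| * M)) (by fun_prop) (Eventually.of_forall fun x => ?_)
  rw [Real.norm_eq_abs, abs_of_pos (exp_pos _), exp_le_exp]
  calc t * φ x ≤ |t * φ x| := le_abs_self _
    _ = |t| * |φ x| := abs_mul _ _
    _ ≤ _ := mul_le_mul_of_nonneg_left (hM x) (abs_nonneg _)

lemma aux_deriv {h φ : ℝ → ℝ} (hi : Integrable h) (hφ : Continuous φ) {M : ℝ}
    (hM : ∀ x, |φ x| ≤ M) (t : ℝ) :
    HasDerivAt (fun t => ∫ x, h x * exp (t * φ x)) (∫ x, h x * (φ x * exp (t * φ x))) t := by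
  have hM0 : 0 ≤ M := (abs_nonneg _).trans (hM 0)
  refine (hasDerivAt_integral_of_dominated_loc_of_deriv_le
    (F := fun t x => h x * exp (t * φ x)) (F' := fun t x => h x * (φ x * exp (t * φ x)))
    (bound := fun x => |h x| * (M * exp ((|t| + 1) * M)))
    (Metric.ball_mem_nhds t one_pos) ?_ ?_ ?_ ?_ ?_ ?_).2
  · exact Eventually.of_forall fun s => (aux_int hi hφ hM s).aestronglyMeasurable
  · exact aux_int hi hφ hM t
  · exact hi.aestronglyMeasurable.mul (by fun_prop)
  · refine Eventually.of_forall fun x s hs => ?_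
    rw [norm_mul, Real.norm_eq_abs, norm_mul, Real.norm_eq_abs, Real.norm_eq_abs,
      abs_of_pos (exp_pos _)]
    have hs' : |s| ≤ |t| + 1 := by
      rw [Metric.mem_ball, Real.dist_eq] at hs
      have := abs_sub_abs_le_abs_sub s t
      linarith
    have : s * φ x ≤ (|t| + 1) * M := by
      calc s * φ x ≤ |s * φ x| := le_abs_self _
        _ = |s| * |φ x| := abs_mul _ _
        _ ≤ _ := mul_le_mul hs' (hM x) (abs_nonneg _) (by positivity)
    gcongr
    exact hM x
  · exact hi.abs.mul_const _
  · refine Eventually.of_forall fun x s _ => ?_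
    have := (((hasDerivAt_id s).mul_const (φ x)).exp).const_mul (h x)
    exact this.congr_deriv (by simp only [id]; ring)

lemma aux_signint {w φ ψ : ℝ → ℝ} {r : ℝ} (hr : 0 < r) (hwc : Continuous w) (hwp : ∀ x, 0 < w x)
    (hwe : ∀ x, w (-x) = w x) (hφ : Continuous φ) (hφo : ∀ x, φ (-x) = - φ x)
    (hφm : StrictMono φ) (hψ : Continuous ψ) (hψo : ∀ x, ψ (-x) = - ψ x)
    (h1 : ∀ p, 0 < p → p < φ r → 0 < ψ p) (h2 : ∀ p, φ r < p → ψ p < 0)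
    (hi : Integrable (fun x => ((r^2 * x - x^3) * w x) * ψ (φ x))) :
    0 < ∫ x, ((r^2 * x - x^3) * w x) * ψ (φ x) := by
  have h0 : φ 0 = 0 := by have := hφo 0; simp at this; linarith
  have hpos : ∀ x, 0 < x → 0 ≤ ((r^2 * x - x^3) * w x) * ψ (φ x) := by
    intro x hx
    have e : r^2 * x - x^3 = x * (r - x) * (r + x) := by ring
    have hφx : 0 < φ x := h0 ▸ hφm hx
    rcases lt_trichotomy x r with h | h | h
    · have := h1 _ hφx (hφm h)
      have := hwp x
      have : 0 < r - x := by linarith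
      rw [e]; positivity
    · rw [e, h]; simp
    · have a1 := h2 _ (hφm h)
      have a2 := hwp x
      have : 0 < x - r := by linarith
      have a3 : 0 < x * (x - r) * (r + x) * w x * (- ψ (φ x)) := by
        have : 0 < - ψ (φ x) := by linarith
        positivity
      rw [e]; nlinarith
  refine aux_pos (by fun_prop) hi (fun x => ?_) (x := 2 * r) ?_
  · rcases lt_trichotomy x 0 with h | h | h
    · have := hpos (-x) (by linarith)
      rw [hwe, hφo, hψo] at this
      nlinarith
    · subst h; simp
    · exact hpos x h
  · have a1 := h2 _ (hφm (show r < 2 * r by linarith))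
    refine mul_ne_zero (mul_ne_zero ?_ (hwp _).ne') a1.ne
    have : 0 < r^3 := by positivity
    nlinarith

lemma aux_neg_integral (f : ℝ → ℝ) : ∫ x, f (-x) = ∫ x, f x :=
  integral_neg_eq_self f volume

lemma aux_main {w φ : ℝ → ℝ} {r M : ℝ} (hr : 0 < r) (hwc : Continuous w) (hwp : ∀ x, 0 < w x)
    (hwe : ∀ x, w (-x) = w x) (hφ : Continuous φ) (hφo : ∀ x, φ (-x) = - φ x)
    (hφm : StrictMono φ) (hM : ∀ x, |φ x| ≤ M)
    (hi : Integrable (fun x => (r^2 * x - x^3) * w x)) :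
    ∃ D : ℝ, (∀ t, ∫ x, ((r^2 * x - x^3) * w x) * exp (-t * φ x) =
        - ∫ x, ((r^2 * x - x^3) * w x) * exp (t * φ x)) ∧
      HasDerivAt (fun t => ∫ x, ((r^2 * x - x^3) * w x) * exp (t * φ x)) D 0 ∧
      (D ≤ 0 → ∀ t, 0 < t → ∫ x, ((r^2 * x - x^3) * w x) * exp (t * φ x) < 0) ∧
      (0 < D → ∃ t0, 0 < t0 ∧ ∫ x, ((r^2 * x - x^3) * w x) * exp (t0 * φ x) = 0 ∧
        ∀ t, 0 < t → ∫ x, ((r^2 * x - x^3) * w x) * exp (t * φ x) = 0 → t = t0) := by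
  set g : ℝ → ℝ := fun x => (r^2 * x - x^3) * w x with hg
  have hgc : Continuous g := by fun_prop
  have hgo : ∀ x, g (-x) = - g x := fun x => by simp only [hg, hwe]; ring
  change ∃ D : ℝ, (∀ t, ∫ x, g x * exp (-t * φ x) = - ∫ x, g x * exp (t * φ x)) ∧
      HasDerivAt (fun t => ∫ x, g x * exp (t * φ x)) D 0 ∧
      (D ≤ 0 → ∀ t, 0 < t → ∫ x, g x * exp (t * φ x) < 0) ∧
      (0 < D → ∃ t0, 0 < t0 ∧ ∫ x, g x * exp (t0 * φ x) = 0 ∧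
        ∀ t, 0 < t → ∫ x, g x * exp (t * φ x) = 0 → t = t0)
  have h0 : φ 0 = 0 := by have := hφo 0; simp at this; linarith
  have hq : 0 < φ r := h0 ▸ hφm hr
  have hint := fun t => aux_int hi hφ hM t
  have hder := fun t => aux_deriv hi hφ hM t
  have hneg : ∀ t, ∫ x, g x * exp (-t * φ x) = - ∫ x, g x * exp (t * φ x) := by
    intro t
    rw [← aux_neg_integral, ← integral_neg]
    congr 1; ext x
    rw [hgo, hφo]; ring_nf
  have hsi : ∀ t, Integrable (fun x => g x * sinh (t * φ x)) := by
    intro t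
    have := ((hint t).sub (hint (-t))).div_const 2
    refine this.congr (Eventually.of_forall fun x => ?_)
    simp only [Pi.sub_apply, Real.sinh_eq, hg]
    rw [neg_mul]; ring
  have hK : ∀ t, ∫ x, g x * exp (t * φ x) = ∫ x, g x * sinh (t * φ x) := by
    intro t
    have e1 : ∫ x, g x * sinh (t * φ x) =
        ∫ x, (g x * exp (t * φ x) - g x * exp (-t * φ x)) / 2 := by
      congr 1; ext x
      rw [Real.sinh_eq, neg_mul]; ring
    rw [e1, integral_div, integral_sub (hint t) (hint (-t)), hneg]; ring
  have hφi : Integrable (fun x => g x * φ x) :=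
    hi.mul_bdd (c := M) (by fun_prop) (Eventually.of_forall fun x => hM x)
  have hS : ∀ t, 0 < t → 0 < sinh (t * φ r) := fun t ht => Real.sinh_pos_iff.2 (by positivity)
  have hD := hder 0
  simp only [zero_mul, exp_zero, mul_one] at hD
  have C1 : ∀ t s, 0 < t → t < s → (∫ x, g x * sinh (s * φ x)) * sinh (t * φ r) <
      (∫ x, g x * sinh (t * φ x)) * sinh (s * φ r) := by
    intro t s ht hts
    have e : (fun x => g x * (sinh (t * φ x) * sinh (s * φ r) - sinh (s * φ x) * sinh (t * φ r)))
      = fun x => g x * sinh (t * φ x) * sinh (s * φ r) - g x * sinh (s * φ x) * sinh (t * φ r) := by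
      ext x; ring
    have i1 := (hsi t).mul_const (sinh (s * φ r))
    have i2 := (hsi s).mul_const (sinh (t * φ r))
    have := aux_signint (ψ := fun p => sinh (t * p) * sinh (s * φ r) - sinh (s * p) * sinh (t * φ r))
      hr hwc hwp hwe hφ hφo hφm (by fun_prop)
      (fun x => by simp only [mul_neg, Real.sinh_neg]; ring)
      (fun p hp hpq => by have := aux_R ht hts hp hpq; linarith)
      (fun p hpq => by have := aux_R ht hts hq hpq; linarith)
      (by change Integrable (fun x => g x * _); rw [e]; exact i1.sub i2)
    change 0 < ∫ x, g x * _ at this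
    rw [e, integral_sub i1 i2, integral_mul_const, integral_mul_const] at this
    linarith
  have C2 : ∀ t, 0 < t → (∫ x, g x * sinh (t * φ x)) * φ r <
      (∫ x, g x * φ x) * sinh (t * φ r) := by
    intro t ht
    have e : (fun x => g x * (φ x * sinh (t * φ r) - sinh (t * φ x) * φ r))
      = fun x => g x * φ x * sinh (t * φ r) - g x * sinh (t * φ x) * φ r := by
      ext x; ring
    have i1 := hφi.mul_const (sinh (t * φ r))
    have i2 := (hsi t).mul_const (φ r)
    have := aux_signint (ψ := fun p => p * sinh (t * φ r) - sinh (t * p) * φ r)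
      hr hwc hwp hwe hφ hφo hφm (by fun_prop)
      (fun x => by simp only [mul_neg, Real.sinh_neg]; ring)
      (fun p hp hpq => by have := aux_D ht hp hpq; linarith)
      (fun p hpq => by have := aux_D ht hq hpq; linarith)
      (by change Integrable (fun x => g x * _); rw [e]; exact i1.sub i2)
    change 0 < ∫ x, g x * _ at this
    rw [e, integral_sub i1 i2, integral_mul_const, integral_mul_const] at this
    linarith
  refine ⟨_, hneg, hD, ?_, ?_⟩
  · intro hD0 t ht
    rw [hK]
    have := C2 t ht
    have h3 := hS t ht
    by_contra! hc
    nlinarith [mul_nonneg hc hq.le, mul_nonneg (sub_nonneg.2 hD0) h3.le]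
  · intro hD0
    have hcont : Continuous (fun t => ∫ x, g x * exp (t * φ x)) :=
      continuous_iff_continuousAt.2 fun t => (hder t).continuousAt
    have hz : ∫ x, g x * exp (0 * φ x) = 0 := by
      rw [hK]; simp
    obtain ⟨s, hs, hKs⟩ : ∃ s, 0 < s ∧ 0 < ∫ x, g x * exp (s * φ x) := by
      have h1 := hD.tendsto_slope_zero_right
      have h2 := (h1.eventually (lt_mem_nhds hD0)).and self_mem_nhdsWithin
      obtain ⟨s, hs1, hs2⟩ := h2.exists
      have hs2 : 0 < s := hs2
      refine ⟨s, hs2, ?_⟩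
      rw [zero_add, hz, sub_zero, smul_eq_mul] at hs1
      exact (pos_iff_pos_of_mul_pos hs1).1 (inv_pos.2 hs2)
    obtain ⟨T, hT, hKT⟩ : ∃ T, 0 < T ∧ ∫ x, g x * exp (T * φ x) < 0 := by
      have iA : Integrable (fun x => |g x|) := hi.abs
      have iB : Integrable (fun x => |g x| * max (|φ x| - φ r) 0) := by
        refine iA.mul_bdd (c := M) (by fun_prop) (Eventually.of_forall fun x => ?_)
        rw [Real.norm_eq_abs, abs_of_nonneg (le_max_right _ _)]
        exact max_le (by linarith [hM x]) ((abs_nonneg _).trans (hM 0))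
      have hB : 0 < ∫ x, |g x| * max (|φ x| - φ r) 0 := by
        refine aux_pos (by fun_prop) iB (fun x => by positivity) (x := 2 * r) ?_
        have a1 := hφm (show r < 2 * r by linarith)
        refine mul_ne_zero (abs_ne_zero.2 (mul_ne_zero ?_ (hwp _).ne')) ?_
        · have : 0 < r^3 := by positivity
          nlinarith
        · have := le_abs_self (φ (2 * r))
          exact (lt_max_of_lt_left (by linarith)).ne'
      have hA : 0 ≤ ∫ x, |g x| := integral_nonneg fun x => abs_nonneg _
      set A := ∫ x, |g x|
      set B := ∫ x, |g x| * max (|φ x| - φ r) 0 with hBdef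
      refine ⟨(A + 1) / B, by positivity, ?_⟩
      have hT : 0 < (A + 1) / B := by positivity
      have hTB : (A + 1) / B * B = A + 1 := by field_simp
      set T := (A + 1) / B
      have hpos : ∀ x, 0 ≤ x → g x * sinh (T * φ x) ≤
          sinh (T * φ r) * (|g x| - T * (|g x| * max (|φ x| - φ r) 0)) := by
        intro x hx
        have e : g x = x * (r - x) * (r + x) * w x := by simp only [hg]; ring
        have hw := hwp x
        have hφx : 0 ≤ φ x := h0 ▸ hφm.monotone hx
        rw [abs_of_nonneg hφx]
        rcases le_total x r with h | h
        · have hgx : 0 ≤ g x := by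
            have : 0 ≤ r - x := by linarith
            rw [e]; positivity
          rw [abs_of_nonneg hgx, max_eq_right (by linarith [hφm.monotone h])]
          have : sinh (T * φ x) ≤ sinh (T * φ r) :=
            Real.sinh_le_sinh.2 (mul_le_mul_of_nonneg_left (hφm.monotone h) hT.le)
          nlinarith [mul_le_mul_of_nonneg_left this hgx]
        · have hgx : g x ≤ 0 := by
            have h3 : 0 ≤ x - r := by linarith
            have : 0 ≤ x * (x - r) * (r + x) * w x := by positivity
            rw [e]; nlinarith
          have hm := hφm.monotone h
          rw [abs_of_nonpos hgx, max_eq_left (by linarith)]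
          have h5 := aux_E hT hq hm
          have h6 := mul_le_mul_of_nonneg_left h5 (neg_nonneg.2 hgx)
          have h7 := mul_nonneg (neg_nonneg.2 hgx) (hS T hT).le
          nlinarith
      have hall : ∀ x, g x * sinh (T * φ x) ≤
          sinh (T * φ r) * (|g x| - T * (|g x| * max (|φ x| - φ r) 0)) := by
        intro x
        rcases le_total 0 x with h | h
        · exact hpos x h
        · have := hpos (-x) (by linarith)
          rw [hgo, hφo, mul_neg, Real.sinh_neg, abs_neg, abs_neg, neg_mul_neg] at this
          exact this
      have h8 := integral_mono (hsi T) ((iA.sub (iB.const_mul T)).const_mul _) hall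
      rw [hK]
      refine h8.trans_lt ?_
      simp only [Pi.sub_apply]
      rw [integral_const_mul, integral_sub iA (iB.const_mul T), integral_const_mul, ← hBdef, hTB]
      nlinarith [hS T hT]
    obtain ⟨t0, ht0, hKt0⟩ := intermediate_value_uIcc (a := s) (b := T) hcont.continuousOn
      (show (0:ℝ) ∈ _ from Set.mem_uIcc.2 (Or.inr ⟨hKT.le, hKs.le⟩))
    have ht0p : 0 < t0 := lt_of_lt_of_le (lt_min hs hT) ht0.1
    have hlt : ∀ t s, 0 < t → t < s → ∫ x, g x * exp (t * φ x) = 0 →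
        ∫ x, g x * exp (s * φ x) = 0 → False := by
      intro t s ht hts h1 h2
      have := C1 t s ht hts
      rw [← hK, ← hK, h1, h2] at this
      simp at this
    refine ⟨t0, ht0p, hKt0, fun t ht h => ?_⟩
    rcases lt_trichotomy t t0 with h' | h' | h'
    · exact (hlt _ _ ht h' h hKt0).elim
    · exact h'
    · exact (hlt _ _ ht0p h' hKt0 h).elim

lemma aux_gauss {α k d : ℝ} (hk : 0 < k) (hd : 0 < d) (n : ℕ) :
    Integrable (fun x : ℝ => x ^ n * exp (α * log (1 + k * x ^ 2) - x ^ 2 / d)) := by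
  obtain ⟨C, hC⟩ : ∃ C : ℝ, ∀ x : ℝ,
      α * log (1 + k * x ^ 2) - x ^ 2 / d ≤ C + -(1 / (2 * d)) * x ^ 2 := by
    set A := |α| + 1 with hA
    have hA0 : 0 < A := by positivity
    set δ := 1 / (2 * d * k * A) with hδ
    have hδ0 : 0 < δ := by positivity
    refine ⟨A * (δ - 1 - log δ), fun x => ?_⟩
    have hy : 1 ≤ 1 + k * x ^ 2 := by nlinarith [mul_nonneg hk.le (sq_nonneg x)]
    have hl := Real.log_nonneg hy
    have h1 : log (δ * (1 + k * x^2)) ≤ δ * (1 + k * x^2) - 1 :=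
      Real.log_le_sub_one_of_pos (by positivity)
    rw [Real.log_mul hδ0.ne' (by positivity)] at h1
    have h2 : α * log (1 + k * x ^ 2) ≤ A * log (1 + k * x ^ 2) :=
      mul_le_mul_of_nonneg_right (by linarith [le_abs_self α]) hl
    have h3 : A * log (1 + k * x ^ 2) ≤ A * (δ * (1 + k * x^2) - 1 - log δ) :=
      mul_le_mul_of_nonneg_left (by linarith) hA0.le
    have h4 : A * (δ * (1 + k * x^2) - 1 - log δ) =
        A * (δ - 1 - log δ) + 1 / (2 * d) * x ^ 2 := by
      have : A * δ * k = 1 / (2 * d) := by rw [hδ]; field_simp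
      rw [← this]; ring
    have h5 : x ^ 2 / d = 2 * (1 / (2 * d) * x ^ 2) := by field_simp
    rw [h5]; linarith
  have hg : Integrable (fun x : ℝ => exp C * (x ^ n * exp (-(1 / (2 * d)) * x ^ 2))) := by
    have := integrable_rpow_mul_exp_neg_mul_sq (b := 1 / (2 * d)) (by positivity)
      (s := (n : ℝ)) (by have : (0:ℝ) ≤ n := n.cast_nonneg
                         linarith)
    simp only [Real.rpow_natCast] at this
    exact this.const_mul _
  refine hg.mono ?_ (Eventually.of_forall fun x => ?_)
  · have : Continuous (fun x : ℝ => log (1 + k * x ^ 2)) :=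
      Continuous.log (by fun_prop) (fun x => by positivity)
    exact (by fun_prop : Continuous (fun x : ℝ => x ^ n *
      exp (α * log (1 + k * x ^ 2) - x ^ 2 / d))).aestronglyMeasurable
  · have h := exp_le_exp.2 (hC x)
    rw [exp_add] at h
    rw [norm_mul, norm_mul, norm_mul, Real.norm_eq_abs (exp _), abs_of_pos (exp_pos _),
      Real.norm_eq_abs (exp _), abs_of_pos (exp_pos _), Real.norm_eq_abs (exp _),
      abs_of_pos (exp_pos _)]
    nlinarith [mul_le_mul_of_nonneg_left h (norm_nonneg (x ^ n))]

/-- For a > 0, θ > 0, σa > 0, σm > 0 and ν ∈ [0,1], the equation F[μ] = 0 has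
either exactly one solution (namely μ = 0) or exactly three solutions; it has exactly three
solutions iff F'_μ[0] > 0, and exactly one solution iff F'_μ[0] ≤ 0. -/
theorem stmt0 (a θ σa σm ν : ℝ) (ha : 0 < a) (hθ : 0 < θ) (hσa : 0 < σa) (hσm : 0 < σm)
    (hν : ν ∈ Set.Icc (0 : ℝ) 1) :
    ({μ : ℝ | F ν σa σm a θ μ = 0} = {0} ∨ {μ : ℝ | F ν σa σm a θ μ = 0}.ncard = 3) ∧
    ({μ : ℝ | F ν σa σm a θ μ = 0}.ncard = 3 ↔ 0 < Fmu' ν σa σm a θ) ∧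
    ({μ : ℝ | F ν σa σm a θ μ = 0} = {0} ↔ Fmu' ν σa σm a θ ≤ 0) := by
  set α := (a - θ - ν * σm ^ 2 + σa ^ 2 / σm ^ 2) / σm ^ 2 with hα
  set k := σm ^ 2 / σa ^ 2 with hk
  have hk0 : 0 < k := by positivity
  set w : ℝ → ℝ := fun x => exp (α * log (1 + k * x ^ 2) - x ^ 2 / σm ^ 2) with hw
  set φ : ℝ → ℝ := fun x => arctan (σm * x / σa) with hφd
  set c := 2 * θ / (σa * σm) with hc
  have hc0 : 0 < c := by positivity
  have hrho : ∀ μ x, rho0 ν σa σm a θ μ x = w x * exp (c * μ * φ x) := by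
    intro μ x
    simp only [rho0, hw, hφd, ← exp_add]
    congr 1
    rw [← hα, ← hk, hc]; ring
  have hb : 0 < a + (1 - ν) * σm ^ 2 := by
    have : 0 ≤ (1 - ν) * σm ^ 2 := mul_nonneg (by linarith [hν.2]) (by positivity)
    linarith
  obtain ⟨r, hr, hr2⟩ : ∃ r, 0 < r ∧ r ^ 2 = a + (1 - ν) * σm ^ 2 :=
    ⟨√(a + (1 - ν) * σm ^ 2), Real.sqrt_pos.2 hb, Real.sq_sqrt hb.le⟩
  have hwc : Continuous w := by
    have : Continuous (fun x : ℝ => log (1 + k * x ^ 2)) :=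
      Continuous.log (by fun_prop) (fun x => by positivity)
    fun_prop
  have hwp : ∀ x, 0 < w x := fun x => exp_pos _
  have hwe : ∀ x, w (-x) = w x := fun x => by simp only [hw, neg_sq]
  have hφ : Continuous φ := by
    exact Real.continuous_arctan.comp (by fun_prop)
  have hφo : ∀ x, φ (-x) = - φ x := fun x => by
    simp only [hφd]; rw [← Real.arctan_neg]; congr 1; ring
  have hφm : StrictMono φ := by
    intro x y hxy
    apply Real.arctan_strictMono
    have : σm * x < σm * y := mul_lt_mul_of_pos_left hxy hσm
    exact div_lt_div_of_pos_right this hσa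
  have hM : ∀ x, |φ x| ≤ π / 2 := fun x =>
    abs_le.2 ⟨(Real.neg_pi_div_two_lt_arctan _).le, (Real.arctan_lt_pi_div_two _).le⟩
  have hp : ∀ n : ℕ, Integrable (fun x => x ^ n * w x) := fun n =>
    aux_gauss hk0 (by positivity) n
  have hw0 : Integrable w := by simpa using hp 0
  have hg : Integrable (fun x => (r^2 * x - x^3) * w x) := by
    refine (((hp 1).const_mul (r^2)).sub (hp 3)).congr (Eventually.of_forall fun x => ?_)
    simp only [Pi.sub_apply]; ring
  obtain ⟨D, hneg, hD, hD1, hD2⟩ := aux_main hr hwc hwp hwe hφ hφo hφm hM hg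
  set K : ℝ → ℝ := fun t => ∫ x, ((r^2 * x - x^3) * w x) * exp (t * φ x) with hK
  have hZ : ∀ μ, Z ν σa σm a θ μ = ∫ x, w x * exp (c * μ * φ x) := by
    intro μ; simp only [Z, hrho]
  have hZp : ∀ μ, 0 < Z ν σa σm a θ μ := by
    intro μ
    rw [hZ]
    exact aux_pos (by fun_prop) (aux_int hw0 hφ hM _)
      (fun x => (mul_pos (hwp x) (exp_pos _)).le) (x := 0) (mul_pos (hwp 0) (exp_pos _)).ne'
  have hpe : ∀ (n : ℕ) (t : ℝ), Integrable (fun x => x ^ n * w x * exp (t * φ x)) := fun n t =>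
    aux_int (hp n) hφ hM t
  have hparts : ∀ μ, θ * ∫ x, (x - μ) * (w x * exp (c * μ * φ x)) = K (c * μ) := by
    intro μ
    have hd : ∀ x, HasDerivAt (fun x => (σa ^ 2 + σm ^ 2 * x ^ 2) * (w x * exp (c * μ * φ x)))
        (2 * ((r^2 * x - x^3) * w x * exp (c * μ * φ x)) -
          2 * (θ * ((x - μ) * (w x * exp (c * μ * φ x))))) x := by
      intro x
      have hpos : 0 < 1 + k * x ^ 2 := by positivity
      have hsq : HasDerivAt (fun x : ℝ => x ^ 2) (2 * x) x := by
        simpa using hasDerivAt_pow 2 x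
      have d1 : HasDerivAt w (w x * (α * ((k * (2 * x)) / (1 + k * x ^ 2)) - 2 * x / σm ^ 2)) x :=
        (((((hsq.const_mul k).const_add 1).log hpos.ne').const_mul α).sub (hsq.div_const _)).exp
      have d2 : HasDerivAt φ (1 / (1 + (σm * x / σa) ^ 2) * (σm * 1 / σa)) x :=
        (((hasDerivAt_id x).const_mul σm).div_const σa).arctan
      have d3 := (d2.const_mul (c * μ)).exp
      have d4 := ((hsq.const_mul (σm ^ 2)).const_add (σa ^ 2)).mul (d1.mul d3)
      refine d4.congr_deriv ?_
      simp only [Pi.mul_apply]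
      have hq : 0 < σa ^ 2 + σm ^ 2 * x ^ 2 := by positivity
      have e1 : 1 + k * x ^ 2 = (σa ^ 2 + σm ^ 2 * x ^ 2) / σa ^ 2 := by
        rw [hk]; field_simp
      have e2 : 1 + (σm * x / σa) ^ 2 = (σa ^ 2 + σm ^ 2 * x ^ 2) / σa ^ 2 := by
        field_simp
      rw [e1, e2, hr2, hc, hk, hα]
      generalize exp (2 * θ / (σa * σm) * μ * φ x) = E
      generalize w x = W
      field_simp
      ring
    have i1 := (hpe 1 (c * μ))
    have i0 := (hpe 0 (c * μ))
    have i2 := (hpe 2 (c * μ))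
    have ig : Integrable (fun x => (r^2 * x - x^3) * w x * exp (c * μ * φ x)) :=
      aux_int hg hφ hM _
    have im : Integrable (fun x => (x - μ) * (w x * exp (c * μ * φ x))) := by
      refine (i1.sub (i0.const_mul μ)).congr (Eventually.of_forall fun x => ?_)
      simp only [Pi.sub_apply]; ring
    have iq : Integrable (fun x => (σa ^ 2 + σm ^ 2 * x ^ 2) * (w x * exp (c * μ * φ x))) := by
      refine ((i0.const_mul (σa^2)).add (i2.const_mul (σm^2))).congr
        (Eventually.of_forall fun x => ?_)
      simp only [Pi.add_apply]; ring
    have j1 := ig.const_mul 2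
    have j2 := (im.const_mul θ).const_mul 2
    have := integral_eq_zero_of_hasDerivAt_of_integrable hd (j1.sub j2) iq
    rw [integral_sub j1 j2, integral_const_mul, integral_const_mul, integral_const_mul] at this
    simp only [hK]
    linarith
  have hF : ∀ μ, F ν σa σm a θ μ = K (c * μ) * (θ * Z ν σa σm a θ μ)⁻¹ := by
    intro μ
    have h1 := (hZp μ).ne'
    simp only [F, hrho]
    rw [← hparts]
    field_simp
  have hF0 : ∀ μ, F ν σa σm a θ μ = 0 ↔ K (c * μ) = 0 := by
    intro μ
    rw [hF]
    have := mul_pos hθ (hZp μ)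
    simp [(hZp μ).ne', hθ.ne']
  have hKneg : ∀ t, K (-t) = - K t := hneg
  have hK0 : K 0 = 0 := by have := hKneg 0; simp at this; linarith
  have hFder : Fmu' ν σa σm a θ = D * c * (θ * Z ν σa σm a θ 0)⁻¹ := by
    have hZd : HasDerivAt (fun t => ∫ x, w x * exp (t * φ x)) _ (c * 0) :=
      aux_deriv hw0 hφ hM (c * 0)
    have hc' : HasDerivAt (fun μ : ℝ => c * μ) c 0 := by
      simpa using (hasDerivAt_id (0:ℝ)).const_mul c
    have hZd2 := (hZd.comp 0 hc').const_mul θ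
    have hKd : HasDerivAt (fun μ => K (c * μ)) (D * c) 0 := by
      have : HasDerivAt K D (c * 0) := by rw [mul_zero]; exact hD
      exact this.comp 0 hc'
    have hZne : θ * ((fun t => ∫ x, w x * exp (t * φ x)) ∘ fun μ : ℝ => c * μ) 0 ≠ 0 := by
      have := hZp 0
      rw [hZ] at this
      exact (mul_pos hθ this).ne'
    have h := hKd.mul (hZd2.inv hZne)
    have e : (fun μ => F ν σa σm a θ μ) = (fun μ => K (c * μ)) *
        (fun μ => θ * ((fun t => ∫ x, w x * exp (t * φ x)) ∘ fun μ : ℝ => c * μ) μ)⁻¹ := by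
      ext μ
      rw [hF, hZ]; rfl
    rw [Fmu', e, h.deriv]
    simp only [mul_zero, hK0, zero_mul, add_zero, hZ]
    simp
  have hpos := inv_pos.2 (mul_pos hθ (hZp 0))
  have hsgn : 0 < Fmu' ν σa σm a θ ↔ 0 < D := by
    rw [hFder, mul_pos_iff_of_pos_right hpos, mul_pos_iff_of_pos_right hc0]
  have hone : D ≤ 0 → {μ : ℝ | F ν σa σm a θ μ = 0} = {0} := by
    intro h
    ext μ
    simp only [mem_ofPred_eq, mem_singleton_iff, hF0]
    constructor
    · intro hμ
      by_contra hne
      rcases lt_or_gt_of_ne hne with h' | h'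
      · have h1 : K (-(c * μ)) < 0 := hD1 h _ (by nlinarith)
        rw [hKneg, hμ] at h1; simp at h1
      · have h1 : K (c * μ) < 0 := hD1 h _ (by positivity)
        rw [hμ] at h1; simp at h1
    · rintro rfl; simpa using hK0
  have hthree : 0 < D → {μ : ℝ | F ν σa σm a θ μ = 0}.ncard = 3 := by
    intro h
    obtain ⟨t0, ht0, hKt, huniq⟩ := hD2 h
    have hKt : K t0 = 0 := hKt
    have hm : 0 < t0 / c := by positivity
    have hct : c * (t0 / c) = t0 := by field_simp
    rw [Set.ncard_eq_three]
    refine ⟨0, t0 / c, -(t0 / c), by linarith, by linarith, by linarith, ?_⟩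
    ext μ
    simp only [mem_ofPred_eq, mem_insert_iff, mem_singleton_iff, hF0]
    constructor
    · intro hμ
      rcases lt_trichotomy μ 0 with h' | h' | h'
      · right; right
        have := huniq (-(c * μ)) (by nlinarith) (by
          change K (-(c * μ)) = 0
          rw [hKneg, hμ, neg_zero])
        rw [← this]; field_simp
      · exact Or.inl h'
      · right; left
        have := huniq (c * μ) (by positivity) hμ
        rw [← this]; field_simp
    · rintro (rfl | rfl | rfl)
      · simpa using hK0
      · rw [hct]; exact hKt
      · rw [mul_neg, hct, hKneg, hKt, neg_zero]
  rw [← not_lt, hsgn]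
  by_cases h : 0 < D
  · have h3 := hthree h
    refine ⟨Or.inr h3, ⟨fun _ => h, fun _ => h3⟩, ⟨fun h1 => ?_, fun h1 => (h1 h).elim⟩⟩
    rw [h1] at h3; simp at h3
  · have h1 := hone (not_lt.1 h)
    refine ⟨Or.inl h1, ⟨fun h3 => ?_, fun h3 => (h h3).elim⟩, ⟨fun _ => h, fun _ => h1⟩⟩
    rw [h1] at h3; simp at h3
end

section
/- Fix k > 0 and ν ∈ [0,1]. If 0 < a₁ ≤ a₂ and 0 < θ₁ ≤ θ₂, then the stable set {σa > 0 : F'_μ(ν, σa, k·σa, a₁, θ₁)[0] > 0} is contained in the stable set {σa > 0 : F'_μ(ν, σa, k·σa, a₂, θ₂)[0] > 0}; that is, along any ray σm = k·σa the system becomes more stable as a or θ increases. -/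
open MeasureTheory Real Set Filter

/-- The common weight. -/
noncomputable def Wt (k A β x : ℝ) : ℝ :=
  Real.exp (A * Real.log (1 + k ^ 2 * x ^ 2) - β * x ^ 2)

theorem Wt_pos (k A β x : ℝ) : 0 < Wt k A β x := Real.exp_pos _

theorem one_le_base (k x : ℝ) : 1 ≤ 1 + k ^ 2 * x ^ 2 := by nlinarith [sq_nonneg (k * x)]

theorem Wt_cont (k A β : ℝ) : Continuous (Wt k A β) := by
  unfold Wt
  have h : ∀ x : ℝ, 1 + k ^ 2 * x ^ 2 ≠ 0 := fun x => by linarith [one_le_base k x]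
  exact Real.continuous_exp.comp
    ((continuous_const.mul (Continuous.log (by fun_prop) h)).sub (by fun_prop))

theorem Wt_add (k A d β x : ℝ) :
    Wt k (A + d) β x = Wt k A β x * Real.exp (d * Real.log (1 + k ^ 2 * x ^ 2)) := by
  unfold Wt
  rw [← Real.exp_add]; congr 1; ring

theorem Wt_integrable (k A β : ℝ) (hk : 0 < k) (hβ : 0 < β) : Integrable (Wt k A β) := by
  set ε : ℝ := β / (2 * k ^ 2) with hε
  have hεp : 0 < ε := by positivity
  set δ : ℝ := (|A| + 1) / ε with hδ
  have hδp : 0 < δ := by positivity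
  have hg : Integrable (fun x : ℝ => Real.exp (|A| * Real.log δ + ε) * Real.exp (-(β / 2) * x ^ 2)) :=
    (integrable_exp_neg_mul_sq (by positivity)).const_mul _
  refine hg.mono' (Wt_cont k A β).aestronglyMeasurable (ae_of_all _ fun x => ?_)
  rw [Real.norm_eq_abs, abs_of_pos (Wt_pos k A β x), ← Real.exp_add]
  unfold Wt
  apply Real.exp_le_exp.mpr
  set t := 1 + k ^ 2 * x ^ 2 with ht
  have ht1 : 1 ≤ t := one_le_base k x
  have h0 : 0 ≤ Real.log t := Real.log_nonneg ht1
  have h1 : A * Real.log t ≤ |A| * Real.log t := mul_le_mul_of_nonneg_right (le_abs_self A) h0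
  have h2 : Real.log t ≤ t / δ + Real.log δ := by
    have := Real.log_le_sub_one_of_pos (show 0 < t / δ by positivity)
    rw [Real.log_div (by positivity) (by positivity)] at this
    linarith
  have h3 : |A| * (t / δ) ≤ ε * t := by
    have : |A| * (t / δ) = (|A| / (|A| + 1)) * (ε * t) := by
      rw [hδ]; field_simp
    rw [this]
    have h4 : |A| / (|A| + 1) ≤ 1 := by
      rw [div_le_one (by positivity)]; linarith
    have : 0 ≤ ε * t := by positivity
    nlinarith
  have h5 : ε * t = ε + β / 2 * x ^ 2 := by
    rw [hε, ht]; field_simp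
  have h6 := mul_le_mul_of_nonneg_left h2 (abs_nonneg A)
  nlinarith

/-- Anything continuous of at most quartic growth is integrable against the weight. -/
theorem Wt_mul_integrable (k A β C : ℝ) (hk : 0 < k) (hβ : 0 < β) (p : ℝ → ℝ)
    (hp : Continuous p) (hb : ∀ x, |p x| ≤ C * (1 + k ^ 2 * x ^ 2) ^ 2) :
    Integrable (fun x => Wt k A β x * p x) := by
  refine ((Wt_integrable k (A + 2) β hk hβ).const_mul C).mono'
    ((Wt_cont k A β).mul hp).aestronglyMeasurable (ae_of_all _ fun x => ?_)
  have hpos : 0 < 1 + k ^ 2 * x ^ 2 := by linarith [one_le_base k x]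
  rw [Real.norm_eq_abs, abs_mul, abs_of_pos (Wt_pos k A β x), Wt_add]
  have : Real.exp (2 * Real.log (1 + k ^ 2 * x ^ 2)) = (1 + k ^ 2 * x ^ 2) ^ 2 := by
    rw [two_mul, Real.exp_add, Real.exp_log hpos]; ring
  rw [this]
  calc _ ≤ Wt k A β x * (C * (1 + k ^ 2 * x ^ 2) ^ 2) :=
        mul_le_mul_of_nonneg_left (hb x) (Wt_pos k A β x).le
    _ = _ := by ring

theorem abs_arctan_le (y : ℝ) : |Real.arctan y| ≤ 2 := by
  have h1 := Real.arctan_lt_pi_div_two y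
  have h2 := Real.neg_pi_div_two_lt_arctan y
  have := Real.pi_le_four
  rw [abs_le]; constructor <;> linarith

theorem abs_x_le (k x : ℝ) (hk : 0 < k) : |x| ≤ 1 / k * (1 + k ^ 2 * x ^ 2) := by
  have : k * |x| ≤ 1 + k ^ 2 * x ^ 2 := by
    rw [← sq_abs x]; nlinarith [sq_nonneg (k * |x| - 1), sq_nonneg (k * |x|)]
  rw [div_mul_eq_mul_div, one_mul, le_div_iff₀ hk]; linarith

theorem abs_x_le' (k x : ℝ) (hk : 0 < k) : |x| ≤ 1 / k * (1 + k ^ 2 * x ^ 2) ^ 2 := by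
  refine (abs_x_le k x hk).trans ?_
  have := one_le_base k x
  have hk' : 0 < 1 / k := by positivity
  apply mul_le_mul_of_nonneg_left _ hk'.le
  nlinarith

theorem int_x (k A β : ℝ) (hk : 0 < k) (hβ : 0 < β) : Integrable (fun x => Wt k A β x * x) :=
  Wt_mul_integrable k A β (1 / k) hk hβ _ continuous_id fun x => abs_x_le' k x hk

theorem int_xat (k A β : ℝ) (hk : 0 < k) (hβ : 0 < β) :
    Integrable (fun x => Wt k A β x * (x * Real.arctan (k * x))) := by
  refine Wt_mul_integrable k A β (1 / k * 2) hk hβ _ (by fun_prop) fun x => ?_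
  rw [abs_mul]
  calc _ ≤ (1 / k * (1 + k ^ 2 * x ^ 2) ^ 2) * 2 :=
        mul_le_mul (abs_x_le' k x hk) (abs_arctan_le _) (abs_nonneg _) (by positivity)
    _ = _ := by ring

theorem int_x3at (k A β : ℝ) (hk : 0 < k) (hβ : 0 < β) :
    Integrable (fun x => Wt k A β x * (x ^ 3 * Real.arctan (k * x))) := by
  refine Wt_mul_integrable k A β (1 / k ^ 3 * 2) hk hβ _ (by fun_prop) fun x => ?_
  rw [abs_mul]
  have h : |x ^ 3| ≤ 1 / k ^ 3 * (1 + k ^ 2 * x ^ 2) ^ 2 := by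
    rw [div_mul_eq_mul_div, one_mul, le_div_iff₀ (by positivity), abs_pow, ← sq_abs x]
    have hy : 0 ≤ k * |x| := by positivity
    have : |x| ^ 3 * k ^ 3 = (k * |x|) ^ 3 := by ring
    rw [this]
    have : k ^ 2 * |x| ^ 2 = (k * |x|) ^ 2 := by ring
    rw [this]
    generalize k * |x| = y at *
    nlinarith [sq_nonneg (y ^ 2 - y), sq_nonneg (y - 1), sq_nonneg y, sq_nonneg (y^2)]
  calc _ ≤ (1 / k ^ 3 * (1 + k ^ 2 * x ^ 2) ^ 2) * 2 :=
        mul_le_mul h (abs_arctan_le _) (abs_nonneg _) (by positivity)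
    _ = _ := by ring

theorem int_at (k A β : ℝ) (hk : 0 < k) (hβ : 0 < β) :
    Integrable (fun x => Wt k A β x * Real.arctan (k * x)) := by
  refine Wt_mul_integrable k A β 2 hk hβ _ (by fun_prop) fun x => ?_
  have := abs_arctan_le (k * x)
  have := one_le_base k x
  nlinarith

theorem int_x_zero (k A β : ℝ) : ∫ x, Wt k A β x * x = 0 := by
  have h := integral_neg_eq_self (fun x => Wt k A β x * x) volume
  have h2 : (fun x => Wt k A β (-x) * (-x)) = fun x => -(Wt k A β x * x) := by
    funext x; simp [Wt]
  simp only [h2, integral_neg] at h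
  linarith

theorem exp_int (φ g : ℝ → ℝ) (M μ : ℝ) (hφ : Integrable φ) (hg : Continuous g)
    (hM : ∀ x, |g x| ≤ M) : Integrable (fun x => φ x * Real.exp (μ * g x)) := by
  refine hφ.mul_bdd (c := Real.exp (|μ| * M)) (by fun_prop) (ae_of_all _ fun x => ?_)
  rw [Real.norm_eq_abs, Real.abs_exp]
  apply Real.exp_le_exp.mpr
  calc μ * g x ≤ |μ * g x| := le_abs_self _
    _ = |μ| * |g x| := abs_mul _ _
    _ ≤ _ := mul_le_mul_of_nonneg_left (hM x) (abs_nonneg _)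

theorem deriv_lem (φ g : ℝ → ℝ) (M : ℝ) (hφ : Integrable φ) (hg : Continuous g)
    (hM : ∀ x, |g x| ≤ M) :
    HasDerivAt (fun μ => ∫ x, φ x * Real.exp (μ * g x)) (∫ x, φ x * g x) 0 := by
  have key := hasDerivAt_integral_of_dominated_loc_of_deriv_le (μ := volume)
    (F := fun μ x => φ x * Real.exp (μ * g x))
    (F' := fun μ x => φ x * (Real.exp (μ * g x) * g x)) (x₀ := (0:ℝ))
    (s := Metric.ball 0 1) (bound := fun x => |φ x| * (Real.exp M * M))
    (Metric.ball_mem_nhds _ one_pos)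
    (Eventually.of_forall fun μ => (exp_int φ g M μ hφ hg hM).aestronglyMeasurable)
    (exp_int φ g M 0 hφ hg hM)
    (hφ.aestronglyMeasurable.mul (by fun_prop))
    (ae_of_all _ fun x μ hμ => ?_) (hφ.abs.mul_const _)
    (ae_of_all _ fun x μ _ => ?_)
  · simpa using key.2
  · have hμ' : |μ| ≤ 1 := by
      have : |μ| < 1 := by simpa using hμ
      exact this.le
    rw [norm_mul, Real.norm_eq_abs, Real.norm_eq_abs, abs_mul, Real.abs_exp]
    apply mul_le_mul_of_nonneg_left _ (abs_nonneg _)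
    apply mul_le_mul _ (hM x) (abs_nonneg _) (Real.exp_pos _).le
    apply Real.exp_le_exp.mpr
    calc μ * g x ≤ |μ * g x| := le_abs_self _
      _ = |μ| * |g x| := abs_mul _ _
      _ ≤ 1 * M := mul_le_mul hμ' (hM x) (abs_nonneg _) zero_le_one
      _ = M := one_mul _
  · have h : HasDerivAt (fun μ : ℝ => μ * g x) (g x) μ := by
      simpa using (hasDerivAt_id μ).mul_const (g x)
    exact h.exp.const_mul _

/-- The exponent of the weight. -/
noncomputable def Aexp (k ν σ a θ : ℝ) : ℝ :=
  (a - θ - ν * (k * σ) ^ 2 + σ ^ 2 / (k * σ) ^ 2) / (k * σ) ^ 2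

/-- The stability functional. -/
noncomputable def Ist (k A β s : ℝ) : ℝ :=
  ∫ x, Wt k A β x * (s * (x * Real.arctan (k * x)) - 1)

theorem int_g (k A β s : ℝ) (hk : 0 < k) (hβ : 0 < β) :
    Integrable (fun x => Wt k A β x * (s * (x * Real.arctan (k * x)) - 1)) := by
  refine (((int_xat k A β hk hβ).const_mul s).sub (Wt_integrable k A β hk hβ)).congr
    (ae_of_all _ fun x => ?_)
  simp only [Pi.sub_apply]; ring

theorem rho0_eq (k ν σ a θ μ x : ℝ) (hk : 0 < k) (hσ : 0 < σ) :
    rho0 ν σ (k * σ) a θ μ x = Wt k (Aexp k ν σ a θ) (1 / (k * σ) ^ 2) x *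
      Real.exp (μ * (2 * θ / (k * σ ^ 2) * Real.arctan (k * x))) := by
  unfold rho0 Wt Aexp
  rw [← Real.exp_add]
  have h1 : (k * σ) ^ 2 / σ ^ 2 = k ^ 2 := by field_simp
  have h2 : k * σ * x / σ = k * x := by field_simp
  have h3 : 2 * θ * μ / (σ * (k * σ)) = μ * (2 * θ / (k * σ ^ 2)) := by field_simp
  rw [h1, h2, h3]
  congr 1; ring

theorem Fmu_eq (k ν σ a θ : ℝ) (hk : 0 < k) (hσ : 0 < σ) :
    Fmu' ν σ (k * σ) a θ =
      Ist k (Aexp k ν σ a θ) (1 / (k * σ) ^ 2) (2 * θ / (k * σ ^ 2)) /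
        ∫ x, Wt k (Aexp k ν σ a θ) (1 / (k * σ) ^ 2) x := by
  have hβ : 0 < 1 / (k * σ) ^ 2 := by positivity
  unfold Fmu' F Z
  simp only [rho0_eq k ν σ a θ _ _ hk hσ]
  generalize Aexp k ν σ a θ = A
  generalize 1 / (k * σ) ^ 2 = β at *
  generalize 2 * θ / (k * σ ^ 2) = s
  set g : ℝ → ℝ := fun x => s * Real.arctan (k * x) with hgdef
  have hgc : Continuous g := by fun_prop
  have hM : ∀ x, |g x| ≤ |s| * 2 := fun x => by
    rw [hgdef]; simp only [abs_mul]
    exact mul_le_mul_of_nonneg_left (abs_arctan_le _) (abs_nonneg _)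
  have iW := Wt_integrable k A β hk hβ
  have ix := int_x k A β hk hβ
  have dZ := deriv_lem _ g _ iW hgc hM
  have dN := deriv_lem _ g _ ix hgc hM
  have hsplit : (fun μ : ℝ => ∫ x, (x - μ) * (Wt k A β x * Real.exp (μ * g x))) =
      fun μ => (∫ x, Wt k A β x * x * Real.exp (μ * g x)) -
        μ * ∫ x, Wt k A β x * Real.exp (μ * g x) := by
    funext μ
    rw [← integral_const_mul, ← integral_sub (exp_int _ g _ μ ix hgc hM)
      ((exp_int _ g _ μ iW hgc hM).const_mul μ)]
    congr 1; funext x; ring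
  have hZ : 0 < ∫ x, Wt k A β x := by
    rw [integral_pos_iff_support_of_nonneg (fun x => (Wt_pos k A β x).le) iW]
    have : Function.support (Wt k A β) = Set.univ := by
      ext x; simp [(Wt_pos k A β x).ne']
    rw [this]; simp
  have dNum := dN.sub ((hasDerivAt_id (0:ℝ)).mul dZ)
  have hz0 : (∫ x, Wt k A β x * Real.exp (0 * g x)) ≠ 0 := by simpa using hZ.ne'
  have dF := dNum.div dZ hz0
  have dF' := dF.deriv
  have e : (fun μ : ℝ => (∫ x, (x - μ) * (Wt k A β x * Real.exp (μ * g x))) /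
      ∫ x, Wt k A β x * Real.exp (μ * g x)) =
      (((fun μ => ∫ x, Wt k A β x * x * Real.exp (μ * g x)) -
        id * fun μ => ∫ x, Wt k A β x * Real.exp (μ * g x)) /
        fun μ => ∫ x, Wt k A β x * Real.exp (μ * g x)) := by
    funext μ
    exact congrArg (fun z : ℝ => z / ∫ x, Wt k A β x * Real.exp (μ * g x)) (congrFun hsplit μ)
  refine ((congrArg (fun f : ℝ → ℝ => deriv f 0) e).trans dF').trans ?_
  have hI : Ist k A β s = (∫ x, Wt k A β x * x * g x) - ∫ x, Wt k A β x := by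
    have ixg : Integrable (fun x => Wt k A β x * x * g x) := by
      refine ((int_xat k A β hk hβ).const_mul s).congr (ae_of_all _ fun x => ?_)
      simp only [hgdef]; ring
    rw [← integral_sub ixg iW]
    unfold Ist
    congr 1; funext x; simp only [hgdef]; ring
  rw [hI]
  simp [int_x_zero]
  field_simp

theorem Z_pos (k A β : ℝ) (hk : 0 < k) (hβ : 0 < β) : 0 < ∫ x, Wt k A β x := by
  rw [integral_pos_iff_support_of_nonneg (fun x => (Wt_pos k A β x).le)
    (Wt_integrable k A β hk hβ)]
  have : Function.support (Wt k A β) = Set.univ := by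
    ext x; simp [(Wt_pos k A β x).ne']
  rw [this]; simp

theorem stable_iff (k ν σ a θ : ℝ) (hk : 0 < k) (hσ : 0 < σ) :
    0 < Fmu' ν σ (k * σ) a θ ↔
      0 < Ist k (Aexp k ν σ a θ) (1 / (k * σ) ^ 2) (2 * θ / (k * σ ^ 2)) := by
  rw [Fmu_eq k ν σ a θ hk hσ]
  exact div_pos_iff_of_pos_right (Z_pos _ _ _ hk (by positivity))

theorem xat_nonneg (k x : ℝ) (hk : 0 < k) : 0 ≤ x * Real.arctan (k * x) := by
  rcases le_total 0 x with h | h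
  · exact mul_nonneg h (Real.arctan_nonneg.mpr (by positivity))
  · apply mul_nonneg_of_nonpos_of_nonpos h
    have := Real.arctan_nonneg.mpr (show 0 ≤ k * (-x) from mul_nonneg hk.le (by linarith))
    rw [mul_neg, Real.arctan_neg] at this
    linarith

theorem xat_mono (k x y : ℝ) (hk : 0 < k) (h : x ^ 2 ≤ y ^ 2) :
    x * Real.arctan (k * x) ≤ y * Real.arctan (k * y) := by
  have ev : ∀ z : ℝ, z * Real.arctan (k * z) = |z| * Real.arctan (k * |z|) := fun z => by
    rcases abs_choice z with h | h <;> rw [h]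
    rw [mul_neg, Real.arctan_neg]; ring
  rw [ev x, ev y]
  have h' : |x| ≤ |y| := sq_le_sq.mp h
  exact mul_le_mul h' (Real.arctan_strictMono.monotone (mul_le_mul_of_nonneg_left h' hk.le))
    (Real.arctan_nonneg.mpr (by positivity)) (abs_nonneg _)

/-- Single crossing lemma. -/
theorem crossing (k A β d r0 : ℝ) (h : ℝ → ℝ) (hr0 : 0 < r0)
    (i1 : Integrable (fun x => Wt k A β x * h x))
    (i2 : Integrable (fun x => Wt k (A + d) β x * h x))
    (hc : ∀ x, 0 ≤ h x * (Real.exp (d * Real.log (1 + k ^ 2 * x ^ 2)) - r0))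
    (hp : 0 < ∫ x, Wt k A β x * h x) : 0 < ∫ x, Wt k (A + d) β x * h x := by
  calc 0 < r0 * ∫ x, Wt k A β x * h x := mul_pos hr0 hp
    _ = ∫ x, r0 * (Wt k A β x * h x) := (integral_const_mul _ _).symm
    _ ≤ _ := by
      refine integral_mono (i1.const_mul _) i2 fun x => ?_
      simp only [Wt_add]
      have := mul_nonneg (Wt_pos k A β x).le (hc x)
      nlinarith

theorem exp_log_mono (k d x y : ℝ) (hd : 0 ≤ d) (h : x ^ 2 ≤ y ^ 2) :
    Real.exp (d * Real.log (1 + k ^ 2 * x ^ 2)) ≤ Real.exp (d * Real.log (1 + k ^ 2 * y ^ 2)) := by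
  apply Real.exp_le_exp.mpr
  apply mul_le_mul_of_nonneg_left _ hd
  apply Real.log_le_log (by linarith [one_le_base k x])
  nlinarith [mul_le_mul_of_nonneg_left h (sq_nonneg k)]

theorem step_a (k A β s d : ℝ) (hk : 0 < k) (hβ : 0 < β) (hs : 0 < s) (hd : 0 ≤ d)
    (hp : 0 < Ist k A β s) : 0 < Ist k (A + d) β s := by
  obtain ⟨y, hy⟩ : ∃ y : ℝ, s * (y * Real.arctan (k * y)) = 1 := by
    have hat : 0 < Real.arctan k := Real.arctan_pos.mpr hk
    set Y : ℝ := 1 + 1 / (s * Real.arctan k) with hY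
    have hY1 : 1 ≤ Y := by rw [hY]; have : 0 < 1 / (s * Real.arctan k) := by positivity
                           linarith
    have hcont : ContinuousOn (fun y : ℝ => s * (y * Real.arctan (k * y))) (Set.Icc 0 Y) := by
      fun_prop
    have := intermediate_value_Icc (by linarith : (0:ℝ) ≤ Y) hcont
    have hmem : (1:ℝ) ∈ Set.Icc (s * (0 * Real.arctan (k * 0))) (s * (Y * Real.arctan (k * Y))) := by
      refine ⟨by simp, ?_⟩
      have h1 : Real.arctan k ≤ Real.arctan (k * Y) :=
        Real.arctan_strictMono.monotone (by nlinarith)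
      have h2 : s * (Y * Real.arctan k) ≤ s * (Y * Real.arctan (k * Y)) := by
        apply mul_le_mul_of_nonneg_left _ hs.le
        exact mul_le_mul_of_nonneg_left h1 (by linarith)
      have h3 : s * (Y * Real.arctan k) = s * Real.arctan k + 1 := by
        rw [hY]; field_simp
      have : 0 < s * Real.arctan k := by positivity
      linarith
    obtain ⟨y, _, hy⟩ := this hmem
    exact ⟨y, hy⟩
  refine crossing k A β d (Real.exp (d * Real.log (1 + k ^ 2 * y ^ 2))) _ (Real.exp_pos _)
    (int_g k A β s hk hβ) (int_g k (A + d) β s hk hβ) (fun x => ?_) hp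
  rcases le_total (x ^ 2) (y ^ 2) with h | h
  · have h1 := mul_le_mul_of_nonneg_left (xat_mono k x y hk h) hs.le
    have h2 := exp_log_mono k d x y hd h
    exact mul_nonneg_of_nonpos_of_nonpos (by linarith) (by linarith)
  · have h1 := mul_le_mul_of_nonneg_left (xat_mono k y x hk h) hs.le
    have h2 := exp_log_mono k d y x hd h
    exact mul_nonneg (by linarith) (by linarith)

theorem int_h (k A β P : ℝ) (hk : 0 < k) (hβ : 0 < β) :
    Integrable (fun x => Wt k A β x *
      (x * Real.arctan (k * x) * (P - β * k ^ 2 * x ^ 2))) := by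
  refine (((int_xat k A β hk hβ).const_mul P).sub
    ((int_x3at k A β hk hβ).const_mul (β * k ^ 2))).congr (ae_of_all _ fun x => ?_)
  simp only [Pi.sub_apply]; ring

theorem ibp (k A β s : ℝ) (hk : 0 < k) (hβ : 0 < β) :
    Ist k A β s = 2 / k * ∫ x, Wt k A β x *
      (x * Real.arctan (k * x) *
        ((k ^ 2 * A + s * k / 2 + k ^ 2 - β) - β * k ^ 2 * x ^ 2)) := by
  set P := k ^ 2 * A + s * k / 2 + k ^ 2 - β with hP
  set T' : ℝ → ℝ := fun x => k * (2 / k * (Wt k A β x *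
      (x * Real.arctan (k * x) * (P - β * k ^ 2 * x ^ 2)) ) -
      k / k * (Wt k A β x * (s * (x * Real.arctan (k * x)) - 1))) with hT'
  have i1 := int_h k A β P hk hβ
  have i2 := int_g k A β s hk hβ
  have iT' : Integrable T' := ((i1.const_mul _).sub (i2.const_mul _)).const_mul k
  have hder : ∀ x, HasDerivAt (fun x => Wt k (A + 1) β x * Real.arctan (k * x)) (T' x) x := by
    intro x
    have hpos : 0 < 1 + k ^ 2 * x ^ 2 := by linarith [one_le_base k x]
    have hb : HasDerivAt (fun x : ℝ => 1 + k ^ 2 * x ^ 2) (k ^ 2 * (2 * x)) x := by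
      simpa using ((hasDerivAt_pow 2 x).const_mul (k ^ 2)).const_add 1
    have hq : HasDerivAt (fun x : ℝ => β * x ^ 2) (β * (2 * x)) x := by
      simpa using (hasDerivAt_pow 2 x).const_mul β
    have hw := (((hb.log hpos.ne').const_mul (A + 1)).sub hq).exp
    have hk1 : HasDerivAt (fun x : ℝ => k * x) k x := by
      simpa using (hasDerivAt_id x).const_mul k
    have hat := hk1.arctan
    have := hw.mul hat
    refine HasDerivAt.congr_deriv this ?_
    have e1 : Real.exp ((A + 1) * Real.log (1 + k ^ 2 * x ^ 2) - β * x ^ 2) =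
        Wt k A β x * (1 + k ^ 2 * x ^ 2) := by
      have := Wt_add k A 1 β x
      rw [one_mul, Real.exp_log hpos] at this
      exact this
    simp only [Pi.sub_apply]
    rw [e1, hT']
    simp only [hP]
    have e2 : 1 + (k * x) ^ 2 = 1 + k ^ 2 * x ^ 2 := by ring
    rw [e2]
    field_simp
    ring
  have h0 := integral_eq_zero_of_hasDerivAt_of_integrable hder iT' (int_at k (A + 1) β hk hβ)
  rw [hT', integral_const_mul, integral_sub (i1.const_mul _) (i2.const_mul _),
    integral_const_mul, integral_const_mul, div_self hk.ne', one_mul] at h0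
  have := (mul_eq_zero.mp h0).resolve_left hk.ne'
  unfold Ist
  linarith

theorem step_θ (k A β s d s' : ℝ) (hk : 0 < k) (hβ : 0 < β) (hd : 0 ≤ d)
    (hs' : s' * k / 2 = s * k / 2 + k ^ 2 * d)
    (hP : 0 < k ^ 2 * A + s * k / 2 + k ^ 2 - β)
    (hp : 0 < Ist k A β s) : 0 < Ist k (A + -d) β s' := by
  rw [ibp k _ β _ hk hβ] at hp ⊢
  have hP' : k ^ 2 * (A + -d) + s' * k / 2 + k ^ 2 - β = k ^ 2 * A + s * k / 2 + k ^ 2 - β := by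
    rw [hs']; ring
  rw [hP']
  set P := k ^ 2 * A + s * k / 2 + k ^ 2 - β
  have h2k : 0 < 2 / k := by positivity
  have hp' := (mul_pos_iff_of_pos_left h2k).mp hp
  refine mul_pos h2k ?_
  set y := Real.sqrt (P / (β * k ^ 2)) with hy
  have hy2 : β * k ^ 2 * y ^ 2 = P := by
    rw [hy, Real.sq_sqrt (by positivity)]; field_simp
  have hbk : 0 < β * k ^ 2 := by positivity
  refine crossing k A β (-d) (Real.exp (-d * Real.log (1 + k ^ 2 * y ^ 2))) _ (Real.exp_pos _)
    (int_h k A β P hk hβ) (int_h k (A + -d) β P hk hβ) (fun x => ?_) hp'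
  rw [mul_assoc]
  apply mul_nonneg (xat_nonneg k x hk)
  have anti : ∀ u v : ℝ, u ^ 2 ≤ v ^ 2 → Real.exp (-d * Real.log (1 + k ^ 2 * v ^ 2)) ≤
      Real.exp (-d * Real.log (1 + k ^ 2 * u ^ 2)) := fun u v h => by
    have := Real.exp_le_exp.mp (exp_log_mono k d u v hd h)
    apply Real.exp_le_exp.mpr
    linarith
  rcases le_total (x ^ 2) (y ^ 2) with h | h
  · have h1 := mul_le_mul_of_nonneg_left h hbk.le
    have h2 := anti x y h
    exact mul_nonneg (by linarith) (by linarith)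
  · have h1 := mul_le_mul_of_nonneg_left h hbk.le
    have h2 := anti y x h
    exact mul_nonneg_of_nonpos_of_nonpos (by linarith) (by linarith)

/-- Along any ray σm = k·σa, the stable set of additive noise intensities is
monotone in the aggregating parameters a and θ: increasing a or θ makes the system more stable. -/
theorem stmt1 (k ν a₁ a₂ θ₁ θ₂ : ℝ) (hk : 0 < k) (hν : ν ∈ Set.Icc (0 : ℝ) 1)
    (ha₁ : 0 < a₁) (ha : a₁ ≤ a₂) (hθ₁ : 0 < θ₁) (hθ : θ₁ ≤ θ₂) :
    {σa : ℝ | 0 < σa ∧ 0 < Fmu' ν σa (k * σa) a₁ θ₁} ⊆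
      {σa : ℝ | 0 < σa ∧ 0 < Fmu' ν σa (k * σa) a₂ θ₂} := by
  rintro σ ⟨hσ, h⟩
  refine ⟨hσ, ?_⟩
  rw [stable_iff k ν σ _ _ hk hσ] at h ⊢
  have hβ : 0 < 1 / (k * σ) ^ 2 := by positivity
  have hda : 0 ≤ (a₂ - a₁) / (k * σ) ^ 2 := div_nonneg (by linarith) (by positivity)
  have hdθ : 0 ≤ (θ₂ - θ₁) / (k * σ) ^ 2 := div_nonneg (by linarith) (by positivity)
  have h1 := step_a k _ _ _ _ hk hβ (by positivity) hda h
  have e1 : Aexp k ν σ a₁ θ₁ + (a₂ - a₁) / (k * σ) ^ 2 = Aexp k ν σ a₂ θ₁ := by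
    unfold Aexp; ring
  rw [e1] at h1
  have hP : 0 < k ^ 2 * Aexp k ν σ a₂ θ₁ + 2 * θ₁ / (k * σ ^ 2) * k / 2 + k ^ 2
      - 1 / (k * σ) ^ 2 := by
    have : k ^ 2 * Aexp k ν σ a₂ θ₁ + 2 * θ₁ / (k * σ ^ 2) * k / 2 + k ^ 2
      - 1 / (k * σ) ^ 2 = a₂ / σ ^ 2 + k ^ 2 * (1 - ν) := by
      unfold Aexp; field_simp; ring
    rw [this]
    have h3 : 0 < a₂ / σ ^ 2 := div_pos (by linarith) (by positivity)
    have h4 : 0 ≤ k ^ 2 * (1 - ν) := mul_nonneg (by positivity) (by linarith [hν.2])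
    linarith
  have h2 := step_θ k _ _ _ _ (2 * θ₂ / (k * σ ^ 2)) hk hβ hdθ (by field_simp; ring) hP h1
  have e2 : Aexp k ν σ a₂ θ₁ + -((θ₂ - θ₁) / (k * σ) ^ 2) = Aexp k ν σ a₂ θ₂ := by
    unfold Aexp; ring
  rw [e2] at h2
  exact h2
end
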